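/- For every integer n₀ ≥ 0 and every ε > 0, the conditional probability P( 𝒴_1(n₀ + ⌊(1−ε) log₂ N⌋) < 𝒴_N(n₀) + ε | F_{n₀} ) converges to 1 in probability as N → ∞; in particular, P( 𝒴_1(n₀ + ⌊(1−ε) log₂ N⌋) < 𝒴_N(n₀) + ε ) → 1 as N → ∞. -/

import Mathlib

open MeasureTheory ProbabilityTheory Real Filter Set

noncomputable section

/-- One step of the `N`-BRW: each of the `N` particles branches into two, the children jump
according to `jump`, and only the `N` right-most particles are kept; the result is the
sorted (ascending) vector of the `N` retained positions. -/
def brwStep (N : ℕ) (pos : Fin N → ℝ) (jump : Fin N → Fin 2 → ℝ) : Fin N → ℝ := fun i =>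
  (((Finset.univ : Finset (Fin N × Fin 2)).val.map fun p => pos p.1 + jump p.1 p.2).sort
      (· ≤ ·)).getD (N + i) 0

/-- The `N`-BRW started from the sorted configuration `x0`, driven by the jumps `jump`:
`brw N x0 jump n i` is the position `X_{i+1}(n)` of the `(i+1)`-th lowest particle at time `n`. -/
def brw (N : ℕ) (x0 : Fin N → ℝ) (jump : ℕ → Fin N → Fin 2 → ℝ) : ℕ → Fin N → ℝ
  | 0 => x0
  | n + 1 => brwStep N (brw N x0 jump n) (jump n)

/-- Position `X_N(n)` of the right-most particle of the `N`-BRW started at the origin. -/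
def brwMax (N : ℕ) (jump : ℕ → Fin N → Fin 2 → ℝ) (n : ℕ) : ℝ :=
  ⨆ i, brw N (fun _ => 0) jump n i

/-- Position `X_1(n)` of the left-most particle of the `N`-BRW started at the origin. -/
def brwMin (N : ℕ) (jump : ℕ → Fin N → Fin 2 → ℝ) (n : ℕ) : ℝ :=
  ⨅ i, brw N (fun _ => 0) jump n i

/-- The tail `P(X > x) = 1/h(x)` of the random variable `X` under `P`. -/
def tail {Ω : Type*} [MeasurableSpace Ω] (P : Measure Ω) (X : Ω → ℝ) (x : ℝ) : ℝ :=
  (P {ω | x < X ω}).toReal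

/-- Generalized inverse `h⁻¹(y)` of `h(x) = 1 / P(X > x)`. -/
def hinv {Ω : Type*} [MeasurableSpace Ω] (P : Measure Ω) (X : Ω → ℝ) (y : ℝ) : ℝ :=
  sInf {x : ℝ | 0 ≤ x ∧ tail P X x ≤ y⁻¹}

/-- The scaling sequence `c_N = h⁻¹(2 N log₂ N)`. -/
def cN {Ω : Type*} [MeasurableSpace Ω] (P : Measure Ω) (X : Ω → ℝ) (N : ℕ) : ℝ :=
  hinv P X (2 * N * Real.logb 2 N)

/-- The σ-algebra `F_n` generated by the jump variables `ξ k i j`, `0 ≤ k ≤ n-1`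
(the trivial σ-algebra for `n = 0`). -/
def brwFilt {Ω : Type*} [MeasurableSpace Ω] (N : ℕ) (ξ : ℕ → Fin N → Fin 2 → Ω → ℝ) (n : ℕ) :
    MeasurableSpace Ω :=
  ⨆ (k : ℕ) (_ : k < n) (i : Fin N) (j : Fin 2), MeasurableSpace.comap (ξ k i j) inferInstance

/-!
Let `k = ⌊(1 - ε) log₂ N⌋` and call a jump big if it exceeds `ε / (k + 1)` in the scale `c_N`. A
particle which is more than `ε` above `𝒴_N(n₀)` at time `n₀ + k` has a big jump among its last `k`
steps. A big jump has at most `2 ^ k ≤ N ^ (1 - ε)` descendants, and Potter's bound and the choice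
of `c_N` make a jump big with probability at most `(log N) ^ q / (2 N log₂ N)`, up to a constant.
The `k` steps contain `2 N k` jumps, so the expected number of such particles is
`O(N ^ (1 - ε) (log N) ^ q)`, and by Markov's inequality all `N` particles are of this kind with
probability tending to `0`. The conditional probability given any σ-algebra is then close to `1`,
because conditional expectation contracts the `L¹` norm.
-/

open scoped Asymptotics Topology

/-- The number of indices `i` with `t < f i`: for a particle configuration `f`, the number of
particles strictly to the right of `t`. -/
def countAbove {ι β : Type*} [Fintype ι] [LinearOrder β] (f : ι → β) (t : β) : ℕ :=
  (Finset.univ.filter fun i => t < f i).card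

section CountAbove

variable {ι κ β : Type*} [Fintype ι] [Fintype κ] [LinearOrder β]

lemma countAbove_eq_countP (f : ι → β) (t : β) :
    countAbove f t = (Finset.univ.val.map f).countP (t < ·) := by
  rw [Multiset.countP_map]
  rfl

lemma countAbove_eq_card {f : ι → β} {t : β} (h : ∀ i, t < f i) :
    countAbove f t = Fintype.card ι := by
  rw [countAbove, Finset.filter_true_of_mem fun i _ => h i, Finset.card_univ]

lemma exists_le_of_countAbove_lt_card {f : ι → β} {t : β} (h : countAbove f t < Fintype.card ι) :
    ∃ i, f i ≤ t := by
  contrapose! h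
  exact (countAbove_eq_card h).ge

lemma countAbove_eq_zero {f : ι → β} {t : β} (h : ∀ i, f i ≤ t) : countAbove f t = 0 := by
  simpa [countAbove, Finset.filter_eq_empty_iff] using h

lemma countAbove_add_le (f : ι → ℝ) (g : ι × κ → ℝ) (s t : ℝ) :
    countAbove (fun p => f p.1 + g p) (s + t) ≤
      Fintype.card κ * countAbove f s + countAbove g t := by
  classical
  have hsub : (Finset.univ.filter fun p : ι × κ => s + t < f p.1 + g p) ⊆
      (Finset.univ.filter fun i => s < f i) ×ˢ Finset.univ ∪
        Finset.univ.filter fun p => t < g p := by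
    intro p hp
    simp only [Finset.mem_union, Finset.mem_product, Finset.mem_filter_univ, Finset.mem_univ,
      and_true] at hp ⊢
    exact lt_or_lt_of_add_lt_add hp
  calc countAbove (fun p => f p.1 + g p) (s + t)
      ≤ ((Finset.univ.filter fun i => s < f i) ×ˢ (Finset.univ : Finset κ)).card
          + countAbove g t := (Finset.card_le_card hsub).trans (Finset.card_union_le _ _)
    _ = Fintype.card κ * countAbove f s + countAbove g t := by
      rw [Finset.card_product, Finset.card_univ, mul_comm]
      rfl

lemma countAbove_prod (f : ι × κ → β) (t : β) :
    countAbove f t = ∑ i, countAbove (fun k => f (i, k)) t := by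
  simp only [countAbove, Finset.card_filter, Fintype.sum_prod_type]

lemma lt_apply_iff_le_countAbove_add {n : ℕ} {f : Fin n → β} (hf : Monotone f) (k : Fin n)
    (t : β) : t < f k ↔ n ≤ countAbove f t + k := by
  constructor
  · intro h
    have hsub : Finset.Ici k ⊆ Finset.univ.filter fun i => t < f i := fun i hi =>
      (Finset.mem_filter_univ i).2 (h.trans_le (hf (Finset.mem_Ici.1 hi)))
    have hcard := Finset.card_le_card hsub
    rw [Fin.card_Ici] at hcard
    exact Nat.sub_le_iff_le_add.1 hcard
  · contrapose!
    intro h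
    have hsub : (Finset.univ.filter fun i => t < f i) ⊆ Finset.Ioi k := fun i hi =>
      Finset.mem_Ioi.2 (hf.reflect_lt (h.trans_lt ((Finset.mem_filter_univ i).1 hi)))
    have hcard := Finset.card_le_card hsub
    rw [Fin.card_Ioi] at hcard
    unfold countAbove
    omega

lemma lt_getD_sort_map_iff (f : ι → β) {k : ℕ} (hk : k < Fintype.card ι) (t d : β) :
    t < ((Finset.univ.val.map f).sort (· ≤ ·)).getD k d ↔
      Fintype.card ι ≤ countAbove f t + k := by
  set l := (Finset.univ.val.map f).sort (· ≤ ·) with hl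
  have hlength : l.length = Fintype.card ι := by
    rw [hl, Multiset.length_sort, Multiset.card_map, Finset.card_val, Finset.card_univ]
  have hcount : countAbove l.get t = countAbove f t := by
    rw [countAbove_eq_countP, countAbove_eq_countP, Fin.univ_val_map, List.ofFn_get, hl,
      Multiset.sort_eq]
  have hmono : Monotone l.get := (Multiset.pairwise_sort _ _).sortedLE
  rw [← hlength] at hk ⊢
  rw [List.getD_eq_getElem _ _ hk, ← hcount]
  exact lt_apply_iff_le_countAbove_add hmono ⟨k, hk⟩ t

end CountAbove

lemma lt_brwStep_iff (N : ℕ) (pos : Fin N → ℝ) (jump : Fin N → Fin 2 → ℝ) (t : ℝ) (i : Fin N) :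
    t < brwStep N pos jump i ↔
      N ≤ countAbove (fun p : Fin N × Fin 2 => pos p.1 + jump p.1 p.2) t + i := by
  have hcard : Fintype.card (Fin N × Fin 2) = N * 2 := by simp
  rw [brwStep, lt_getD_sort_map_iff _ (by omega), hcard]
  omega

lemma countAbove_brwStep_le (N : ℕ) (pos : Fin N → ℝ) (jump : Fin N → Fin 2 → ℝ) (t : ℝ) :
    countAbove (brwStep N pos jump) t ≤
      countAbove (fun p : Fin N × Fin 2 => pos p.1 + jump p.1 p.2) t := by
  rw [countAbove]
  simp only [lt_brwStep_iff]
  generalize countAbove (fun p : Fin N × Fin 2 => pos p.1 + jump p.1 p.2) t = C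
  calc (Finset.univ.filter fun i : Fin N => N ≤ C + i).card
      ≤ (Finset.Ico (N - C) N).card := by
        refine Finset.card_le_card_of_injOn (fun i => (i : ℕ)) (fun i hi => ?_)
          Fin.val_injective.injOn
        have : N ≤ C + i := by simpa using hi
        exact Finset.mem_coe.2 (Finset.mem_Ico.2 ⟨Nat.sub_le_iff_le_add'.2 this, i.isLt⟩)
    _ ≤ C := by rw [Nat.card_Ico]; omega

lemma countAbove_brwStep_add_le (N : ℕ) (pos : Fin N → ℝ) (jump : Fin N → Fin 2 → ℝ) (t η : ℝ) :
    countAbove (brwStep N pos jump) (t + η) ≤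
      2 * countAbove pos t + countAbove (Function.uncurry jump) η :=
  (countAbove_brwStep_le N pos jump (t + η)).trans
    (countAbove_add_le pos (Function.uncurry jump) t η)

lemma le_brwStep {N : ℕ} {pos : Fin N → ℝ} {jump : Fin N → Fin 2 → ℝ} {a : ℝ}
    (hpos : ∀ i, a ≤ pos i) (hjump : ∀ i j, 0 ≤ jump i j) (i : Fin N) :
    a ≤ brwStep N pos jump i := by
  refine le_of_forall_lt fun t ht => (lt_brwStep_iff N pos jump t i).2 ?_
  rw [countAbove_eq_card fun p => by linarith [hpos p.1, hjump p.1 p.2]]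
  simp only [Fintype.card_prod, Fintype.card_fin]
  omega

/-- Particles above the line of slope `η` through `(m, M)` descend either from a particle above it
one step earlier, with two children each, or from a jump larger than `η`. -/
lemma countAbove_brw_add_le (N : ℕ) (x0 : Fin N → ℝ) (jump : ℕ → Fin N → Fin 2 → ℝ)
    (M η : ℝ) (m n : ℕ) :
    countAbove (brw N x0 jump (m + n)) (M + n * η) ≤
      2 ^ n * (countAbove (brw N x0 jump m) M +
        ∑ k ∈ Finset.range n, countAbove (Function.uncurry (jump (m + k))) η) := by
  induction n with
  | zero => simp
  | succ n ih =>
    set S := countAbove (brw N x0 jump m) M +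
      ∑ k ∈ Finset.range n, countAbove (Function.uncurry (jump (m + k))) η
    set B := countAbove (Function.uncurry (jump (m + n))) η
    calc countAbove (brw N x0 jump (m + (n + 1))) (M + (n + 1 : ℕ) * η)
        = countAbove (brwStep N (brw N x0 jump (m + n)) (jump (m + n))) (M + n * η + η) := by
          rw [Nat.cast_succ, add_one_mul, add_assoc]
          rfl
      _ ≤ 2 * countAbove (brw N x0 jump (m + n)) (M + n * η) + B :=
          countAbove_brwStep_add_le _ _ _ _ _
      _ ≤ 2 * (2 ^ n * S) + 2 ^ (n + 1) * B := by
          gcongr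
          exact Nat.le_mul_of_pos_left _ (by positivity)
      _ = 2 ^ (n + 1) * (S + B) := by ring
      _ = _ := by rw [Finset.sum_range_succ, add_assoc]

lemma brw_le_brwMax (N : ℕ) (jump : ℕ → Fin N → Fin 2 → ℝ) (n : ℕ) (i : Fin N) :
    brw N (fun _ => 0) jump n i ≤ brwMax N jump n :=
  le_ciSup (Set.finite_range _).bddAbove i

lemma brwMin_le_brw (N : ℕ) (jump : ℕ → Fin N → Fin 2 → ℝ) (n : ℕ) (i : Fin N) :
    brwMin N jump n ≤ brw N (fun _ => 0) jump n i :=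
  ciInf_le (Set.finite_range _).bddBelow i

lemma monotone_brwMin {N : ℕ} {jump : ℕ → Fin N → Fin 2 → ℝ} (hjump : ∀ n i j, 0 ≤ jump n i j) :
    Monotone (brwMin N jump) := by
  refine monotone_nat_of_le_succ fun n => ?_
  cases isEmpty_or_nonempty (Fin N)
  · simp only [brwMin, Real.iInf_of_isEmpty, le_refl]
  · exact le_ciInf (le_brwStep (brwMin_le_brw N jump n) (hjump n))

lemma brwMin_add_le_brwMax_add {N : ℕ} {jump : ℕ → Fin N → Fin 2 → ℝ} {η : ℝ} {m n : ℕ}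
    (h : 2 ^ n * countAbove
      (fun q : Fin n × Fin N × Fin 2 => jump (m + q.1) q.2.1 q.2.2) η < N) :
    brwMin N jump (m + n) ≤ brwMax N jump m + n * η := by
  have hcount := countAbove_brw_add_le N (fun _ => 0) jump (brwMax N jump m) η m n
  rw [countAbove_eq_zero (brw_le_brwMax N jump m), zero_add, Finset.sum_range] at hcount
  rw [countAbove_prod] at h
  obtain ⟨i, hi⟩ := exists_le_of_countAbove_lt_card
    ((hcount.trans_lt h).trans_eq (Fintype.card_fin N).symm)
  exact (brwMin_le_brw N jump (m + n) i).trans hi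

section Probability

variable {Ω : Type*} [MeasurableSpace Ω]

lemma measurable_countAbove {ι : Type*} [Fintype ι] {Z : ι → Ω → ℝ}
    (hZ : ∀ i, Measurable (Z i)) (t : ℝ) : Measurable fun ω => countAbove (fun i => Z i ω) t := by
  simp only [countAbove, Finset.card_filter]
  exact Finset.measurable_sum _ fun i _ =>
    Measurable.ite (measurableSet_lt measurable_const (hZ i)) measurable_const measurable_const

lemma measurable_brwStep {N : ℕ} {pos : Fin N → Ω → ℝ} {jump : Fin N → Fin 2 → Ω → ℝ}
    (hpos : ∀ i, Measurable (pos i)) (hjump : ∀ i j, Measurable (jump i j)) (i : Fin N) :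
    Measurable fun ω => brwStep N (fun i => pos i ω) (fun i j => jump i j ω) i := by
  refine measurable_of_Ioi fun t => ?_
  simp only [preimage, mem_Ioi, lt_brwStep_iff]
  have hchild (p : Fin N × Fin 2) : Measurable fun ω => pos p.1 ω + jump p.1 p.2 ω :=
    (hpos p.1).add (hjump p.1 p.2)
  exact measurableSet_le measurable_const ((measurable_countAbove hchild t).add_const _)

lemma measurable_brw {N : ℕ} {J : ℕ → Fin N → Fin 2 → Ω → ℝ}
    (hJ : ∀ k i j, Measurable (J k i j)) (x0 : Fin N → ℝ) (n : ℕ) (i : Fin N) :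
    Measurable fun ω => brw N x0 (fun k i j => J k i j ω) n i := by
  induction n generalizing i with
  | zero => exact measurable_const
  | succ n ih => exact measurable_brwStep ih (hJ n) i

lemma measurable_brwMin {N : ℕ} {J : ℕ → Fin N → Fin 2 → Ω → ℝ}
    (hJ : ∀ k i j, Measurable (J k i j)) (n : ℕ) :
    Measurable fun ω => brwMin N (fun k i j => J k i j ω) n :=
  Measurable.iInf fun i => measurable_brw hJ _ n i

lemma measurable_brwMax {N : ℕ} {J : ℕ → Fin N → Fin 2 → Ω → ℝ}
    (hJ : ∀ k i j, Measurable (J k i j)) (n : ℕ) :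
    Measurable fun ω => brwMax N (fun k i j => J k i j ω) n :=
  Measurable.iSup fun i => measurable_brw hJ _ n i

lemma brwFilt_le {N : ℕ} {ξ : ℕ → Fin N → Fin 2 → Ω → ℝ} (hξ : ∀ k i j, Measurable (ξ k i j))
    (n : ℕ) : brwFilt N ξ n ≤ ‹MeasurableSpace Ω› :=
  iSup₂_le fun k _ => iSup₂_le fun i j => (hξ k i j).comap_le

variable {P : Measure Ω}

lemma tail_nonneg (X : Ω → ℝ) (x : ℝ) : 0 ≤ tail P X x := ENNReal.toReal_nonneg

lemma tail_eq_of_map_eq {X Y : Ω → ℝ} (hX : Measurable X) (hY : Measurable Y)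
    (h : Measure.map X P = Measure.map Y P) : tail P X = tail P Y := by
  funext x
  have hx := congrArg (fun ν => ν (Ioi x)) h
  rw [Measure.map_apply hX measurableSet_Ioi, Measure.map_apply hY measurableSet_Ioi] at hx
  exact congrArg ENNReal.toReal hx

lemma tail_div_const {c : ℝ} (hc : 0 < c) (Z : Ω → ℝ) (t : ℝ) :
    tail P (fun ω => Z ω / c) t = tail P Z (t * c) := by
  simp only [tail, lt_div_iff₀ hc]

lemma hinv_nonneg (X : Ω → ℝ) (y : ℝ) : 0 ≤ hinv P X y := Real.sInf_nonneg fun _ h => h.1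

variable [IsFiniteMeasure P]

lemma antitone_tail (X : Ω → ℝ) : Antitone (tail P X) := fun _ _ h =>
  measureReal_mono fun _ hω => h.trans_lt hω

/-- If no `x` has `tail P X x ≤ y⁻¹`, the infimum defining `hinv P X y` takes the value `0`. -/
lemma tail_le_inv_of_hinv_lt {X : Ω → ℝ} {x y : ℝ} (h0 : hinv P X y ≠ 0) (hx : hinv P X y < x) :
    tail P X x ≤ y⁻¹ := by
  have hne : {x : ℝ | 0 ≤ x ∧ tail P X x ≤ y⁻¹}.Nonempty := by
    contrapose! h0
    rw [hinv, h0, Real.sInf_empty]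
  obtain ⟨s, hs, hsx⟩ := exists_lt_of_csInf_lt hne hx
  exact (antitone_tail X hsx.le).trans hs.2

lemma mul_measureReal_le_countAbove_le {ι : Type*} [Fintype ι] {Z : ι → Ω → ℝ}
    (hZ : ∀ i, Measurable (Z i)) (t a : ℝ) :
    a * P.real {ω | a ≤ countAbove (fun i => Z i ω) t} ≤ ∑ i, tail P (Z i) t := by
  have hmeas (i : ι) : MeasurableSet {ω | t < Z i ω} := measurableSet_lt measurable_const (hZ i)
  have hint (i : ι) : Integrable ({ω | t < Z i ω}.indicator (1 : Ω → ℝ)) P :=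
    (integrable_const 1).indicator (hmeas i)
  have hsum (ω : Ω) : (countAbove (fun i => Z i ω) t : ℝ) =
      ∑ i, {ω | t < Z i ω}.indicator (1 : Ω → ℝ) ω := by
    simp only [countAbove, indicator_apply, mem_ofPred_eq, Pi.one_apply, Finset.sum_boole]
  simp only [hsum]
  calc a * P.real {ω | a ≤ ∑ i, {ω | t < Z i ω}.indicator (1 : Ω → ℝ) ω}
      ≤ ∫ ω, ∑ i, {ω | t < Z i ω}.indicator (1 : Ω → ℝ) ω ∂P :=
        mul_meas_ge_le_integral_of_nonneg (Eventually.of_forall fun ω => by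
          simp only [← hsum, Pi.zero_apply, Nat.cast_nonneg])
          (integrable_finsetSum _ fun i _ => hint i) a
    _ = ∑ i, tail P (Z i) t := by
        rw [integral_finsetSum _ fun i _ => hint i]
        exact Finset.sum_congr rfl fun i _ => integral_indicator_one (hmeas i)

lemma measureReal_brwMax_add_lt_brwMin_le {N : ℕ} (hN : 0 < N) {J : ℕ → Fin N → Fin 2 → Ω → ℝ}
    (hJ : ∀ k i j, Measurable (J k i j)) {η τ : ℝ} (hτ : ∀ k i j, tail P (J k i j) η ≤ τ)
    (m n : ℕ) :
    P.real {ω | brwMax N (fun k i j => J k i j ω) m + n * η <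
      brwMin N (fun k i j => J k i j ω) (m + n)} ≤ 2 * (n * 2 ^ n) * τ := by
  set A := {ω | brwMax N (fun k i j => J k i j ω) m + n * η <
    brwMin N (fun k i j => J k i j ω) (m + n)}
  let Z (q : Fin n × Fin N × Fin 2) : Ω → ℝ := J (m + q.1) q.2.1 q.2.2
  have hsub : A ⊆ {ω | (N / 2 ^ n : ℝ) ≤ countAbove (fun q => Z q ω) η} := by
    intro ω hω
    have hcount : N ≤ 2 ^ n * countAbove (fun q => Z q ω) η := by
      by_contra! h
      exact (brwMin_add_le_brwMax_add h).not_gt hω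
    rw [mem_ofPred_eq, div_le_iff₀' (by positivity)]
    exact_mod_cast hcount
  have hmarkov : N / 2 ^ n * P.real A ≤ N / 2 ^ n * (2 * (n * 2 ^ n) * τ) :=
    calc N / 2 ^ n * P.real A
        ≤ N / 2 ^ n * P.real {ω | (N / 2 ^ n : ℝ) ≤ countAbove (fun q => Z q ω) η} :=
          mul_le_mul_of_nonneg_left (measureReal_mono hsub) (by positivity)
      _ ≤ ∑ q, tail P (Z q) η := mul_measureReal_le_countAbove_le (fun q => hJ _ _ _) η _
      _ ≤ ∑ _q : Fin n × Fin N × Fin 2, τ := Finset.sum_le_sum fun q _ => hτ _ _ _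
      _ = N / 2 ^ n * (2 * (n * 2 ^ n) * τ) := by
          simp only [Finset.sum_const, Finset.card_univ, Fintype.card_prod, Fintype.card_fin,
            nsmul_eq_mul, Nat.cast_mul, Nat.cast_ofNat]
          field_simp
  exact le_of_mul_le_mul_left hmarkov (by positivity)

end Probability

lemma integral_abs_condExp_indicator_sub_one_le {Ω : Type*} {m m0 : MeasurableSpace Ω}
    {P : Measure[m0] Ω} [IsFiniteMeasure P] (hm : m ≤ m0) {A : Set Ω} (hA : MeasurableSet[m0] A) :
    ∫ ω, |(P⟦A|m⟧) ω - 1| ∂P ≤ P.real Aᶜ := by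
  set g : Ω → ℝ := A.indicator (fun _ => 1) - fun _ => 1
  have hcond : P[g|m] =ᵐ[P] fun ω => (P⟦A|m⟧) ω - 1 := by
    have h := condExp_sub (μ := P) ((integrable_const (1 : ℝ)).indicator hA)
      (integrable_const (1 : ℝ)) m
    rwa [condExp_const hm] at h
  have habs (ω : Ω) : |g ω| = Aᶜ.indicator 1 ω := by
    by_cases hω : ω ∈ A <;> simp [g, hω]
  calc ∫ ω, |(P⟦A|m⟧) ω - 1| ∂P
      = ∫ ω, |(P[g|m]) ω| ∂P := integral_congr_ae (hcond.symm.fun_comp abs)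
    _ ≤ ∫ ω, |g ω| ∂P := integral_abs_condExp_le _
    _ = P.real Aᶜ := by simp only [habs, integral_indicator_one hA.compl]

lemma measureReal_lt_abs_condExp_indicator_sub_one_le {Ω : Type*}
    {m m0 : MeasurableSpace Ω} {P : Measure[m0] Ω} [IsFiniteMeasure P] (hm : m ≤ m0)
    {A : Set Ω} (hA : MeasurableSet[m0] A) {d : ℝ} (hd : 0 < d) :
    P.real {ω | d < |(P⟦A|m⟧) ω - 1|} ≤ P.real Aᶜ / d := by
  rw [le_div_iff₀' hd]
  calc d * P.real {ω | d < |(P⟦A|m⟧) ω - 1|}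
      ≤ d * P.real {ω | d ≤ |(P⟦A|m⟧) ω - 1|} :=
        mul_le_mul_of_nonneg_left (measureReal_mono fun _ => le_of_lt (α := ℝ)) hd.le
    _ ≤ ∫ ω, |(P⟦A|m⟧) ω - 1| ∂P :=
        mul_meas_ge_le_integral_of_nonneg (Eventually.of_forall fun _ => abs_nonneg _)
          (integrable_condExp.sub (integrable_const 1)).abs d
    _ ≤ P.real Aᶜ := integral_abs_condExp_indicator_sub_one_le hm hA

section DominatedVariation

variable {f : ℝ → ℝ}

lemma pos_of_tendsto_div {c : ℝ} (hf : Antitone f) (hf0 : ∀ x, 0 ≤ f x)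
    (h : Tendsto (fun x => f x / f (2 * x)) atTop (𝓝 c)) (hc : c ≠ 0) (x : ℝ) : 0 < f x := by
  obtain ⟨y, hy, hxy⟩ := ((h.eventually_ne hc).and (eventually_ge_atTop x)).exists
  exact ((hf0 y).lt_of_ne' fun h0 => hy (by rw [h0, zero_div])).trans_le (hf hxy)

lemma isBigO_two_mul_of_tendsto_div {c : ℝ} (hpos : ∀ x, 0 < f x)
    (h : Tendsto (fun x => f x / f (2 * x)) atTop (𝓝 c)) : f =O[atTop] fun x => f (2 * x) :=
  Asymptotics.isBigO_of_div_tendsto_nhds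
    (Eventually.of_forall fun x hx => absurd hx (hpos (2 * x)).ne') c h

lemma le_pow_mul_of_forall_le_mul {K x₀ : ℝ} (hx₀ : 0 ≤ x₀) (hK : 0 ≤ K)
    (h : ∀ x ≥ x₀, f x ≤ K * f (2 * x)) (m : ℕ) {x : ℝ} (hx : x₀ ≤ x) :
    f x ≤ K ^ m * f (2 ^ m * x) := by
  induction m generalizing x with
  | zero => simp
  | succ m ih =>
    calc f x ≤ K * f (2 * x) := h x hx
      _ ≤ K * (K ^ m * f (2 ^ m * (2 * x))) := by
          gcongr
          exact ih (by linarith)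
      _ = K ^ (m + 1) * f (2 ^ (m + 1) * x) := by rw [pow_succ' K, pow_succ 2, mul_assoc, mul_assoc]

lemma exists_le_mul_one_add_pow_mul_of_ge (hf : Antitone f) (hpos : ∀ x, 0 < f x)
    (hdom : f =O[atTop] fun x => f (2 * x)) :
    ∃ x₀ ≥ 0, ∃ q : ℕ, ∀ s ≥ 0, ∀ x ≥ x₀, f x ≤ (2 * (1 + s)) ^ q * f (s * x) := by
  obtain ⟨K, hK⟩ := hdom.bound
  obtain ⟨x₁, hx₁⟩ := eventually_atTop.1 hK
  obtain ⟨q, hq⟩ := pow_unbounded_of_one_lt K one_lt_two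
  have hdouble : ∀ x ≥ max x₁ 0, f x ≤ 2 ^ q * f (2 * x) := fun x hx => by
    have hKx := hx₁ x ((le_max_left _ _).trans hx)
    rw [norm_of_nonneg (hpos _).le, norm_of_nonneg (hpos _).le] at hKx
    exact hKx.trans (mul_le_mul_of_nonneg_right hq.le (hpos _).le)
  refine ⟨max x₁ 0, le_max_right _ _, q, fun s hs x hx => ?_⟩
  have hx0 : 0 ≤ x := (le_max_right _ _).trans hx
  obtain ⟨m, hm, hsm⟩ := exists_nat_pow_near (by linarith : 1 ≤ 1 + s) one_lt_two
  calc f x ≤ (2 ^ q) ^ (m + 1) * f (2 ^ (m + 1) * x) :=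
        le_pow_mul_of_forall_le_mul (le_max_right _ _) (by positivity) hdouble (m + 1) hx
    _ = (2 * 2 ^ m) ^ q * f (2 ^ (m + 1) * x) := by rw [pow_right_comm, pow_succ' 2 m]
    _ ≤ (2 * (1 + s)) ^ q * f (s * x) :=
        mul_le_mul (by gcongr) (hf (by gcongr; linarith)) (hpos _).le (by positivity)

/-- Potter's bound. The hypothesis `hdom` says that `f` is of dominated variation, and `2 ^ q` is
any power of two exceeding its doubling constant. -/
lemma exists_le_mul_one_add_pow_mul (hf : Antitone f) (hpos : ∀ x, 0 < f x)
    (hdom : f =O[atTop] fun x => f (2 * x)) :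
    ∃ (C : ℝ) (q : ℕ), 0 ≤ C ∧ ∀ s ≥ 0, ∀ x ≥ 0, f x ≤ C * (1 + s) ^ q * f (s * x) := by
  obtain ⟨x₀, hx₀, q, hq⟩ := exists_le_mul_one_add_pow_mul_of_ge hf hpos hdom
  have hratio : 0 < f 0 / f x₀ := div_pos (hpos 0) (hpos x₀)
  refine ⟨f 0 / f x₀ * 2 ^ q, q, by positivity, fun s hs x hx => ?_⟩
  have hmax : f x ≤ f 0 / f x₀ * f (max x x₀) := by
    rw [div_mul_eq_mul_div, le_div_iff₀ (hpos x₀)]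
    rcases le_total x₀ x with h | h
    · rw [max_eq_left h, mul_comm]
      gcongr
      · exact (hpos x).le
      · exact hf hx₀
    · rw [max_eq_right h]
      gcongr
      · exact (hpos x₀).le
      · exact hf hx
  calc f x ≤ f 0 / f x₀ * f (max x x₀) := hmax
    _ ≤ f 0 / f x₀ * ((2 * (1 + s)) ^ q * f (s * max x x₀)) :=
        mul_le_mul_of_nonneg_left (hq s hs _ (le_max_right _ _)) hratio.le
    _ ≤ f 0 / f x₀ * ((2 * (1 + s)) ^ q * f (s * x)) :=
        mul_le_mul_of_nonneg_left (mul_le_mul_of_nonneg_left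
          (hf (by gcongr; exact le_max_left _ _)) (by positivity))
          hratio.le
    _ = f 0 / f x₀ * 2 ^ q * (1 + s) ^ q * f (s * x) := by rw [mul_pow]; ring

end DominatedVariation

lemma exists_tail_div_hinv_le {Ω : Type*} [MeasurableSpace Ω] {P : Measure Ω} [IsFiniteMeasure P]
    {X : Ω → ℝ} (hpos : ∀ x, 0 < tail P X x)
    (hdom : tail P X =O[atTop] fun x => tail P X (2 * x)) :
    ∃ (C : ℝ) (q : ℕ), 0 ≤ C ∧ ∀ Z : Ω → ℝ, (∀ x, tail P Z x ≤ tail P X x) →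
      ∀ y > 0, ∀ η > 0, tail P (fun ω => Z ω / hinv P X y) η ≤ C * (1 + 2 / η) ^ q * y⁻¹ := by
  obtain ⟨C, q, hC, hpotter⟩ := exists_le_mul_one_add_pow_mul (antitone_tail X) hpos hdom
  refine ⟨C, q, hC, fun Z hZ y hy η hη => ?_⟩
  rcases (hinv_nonneg (P := P) X y).eq_or_lt' with h0 | hc
  -- With `hinv P X y = 0` the quotient `Z ω / 0` is `0`, which does not exceed `η`.
  · have : tail P (fun ω => Z ω / hinv P X y) η = 0 := by simp [tail, h0, hη.not_gt]
    rw [this]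
    positivity
  · calc tail P (fun ω => Z ω / hinv P X y) η = tail P Z (η * hinv P X y) := tail_div_const hc Z η
      _ ≤ tail P X (η * hinv P X y) := hZ _
      _ ≤ C * (1 + 2 / η) ^ q * tail P X (2 / η * (η * hinv P X y)) :=
          hpotter _ (by positivity) _ (by positivity)
      _ ≤ C * (1 + 2 / η) ^ q * y⁻¹ := by
          gcongr
          refine tail_le_inv_of_hinv_lt hc.ne' ?_
          rw [← mul_assoc, div_mul_cancel₀ _ hη.ne']
          linarith

lemma measureReal_compl_brwMin_lt_le {Ω : Type*} [MeasurableSpace Ω] {P : Measure Ω}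
    [IsFiniteMeasure P] {N : ℕ} (hN : 0 < N) {J : ℕ → Fin N → Fin 2 → Ω → ℝ}
    (hJ : ∀ k i j, Measurable (J k i j)) (hJ0 : ∀ k i j ω, 0 ≤ J k i j ω) {ε τ : ℝ} (hε : 0 < ε)
    {T m n : ℕ} (hT : T ≤ m + n) (hτ : ∀ k i j, tail P (J k i j) (ε / (n + 1)) ≤ τ) :
    P.real {ω | brwMin N (fun k i j => J k i j ω) T < brwMax N (fun k i j => J k i j ω) m + ε}ᶜ ≤
      2 * (n * 2 ^ n) * τ := by
  refine le_trans (measureReal_mono fun ω hω => ?_)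
    (measureReal_brwMax_add_lt_brwMin_le hN hJ hτ m n)
  have hlt : n * (ε / (n + 1)) < ε := by
    rw [mul_div_assoc', div_lt_iff₀ (by positivity)]
    linarith
  calc brwMax N (fun k i j => J k i j ω) m + n * (ε / (n + 1))
      < brwMax N (fun k i j => J k i j ω) m + ε := by gcongr
    _ ≤ brwMin N (fun k i j => J k i j ω) T := not_lt.1 hω
    _ ≤ brwMin N (fun k i j => J k i j ω) (m + n) :=
        monotone_brwMin (fun k i j => hJ0 k i j ω) hT

lemma floor_mul_pow_floor_le {a b c : ℝ} (hab : a ≤ b) (hb : 0 ≤ b) (hc : 1 ≤ c) :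
    ⌊a⌋₊ * c ^ ⌊a⌋₊ ≤ b * c ^ a := by
  rcases le_total 0 a with ha | ha
  · have hfloor : (⌊a⌋₊ : ℝ) ≤ a := Nat.floor_le ha
    rw [← rpow_natCast]
    exact mul_le_mul (hfloor.trans hab) (rpow_le_rpow_of_exponent_le hc hfloor)
      (by positivity) hb
  · rw [Nat.floor_of_nonpos ha, Nat.cast_zero, zero_mul]
    positivity

lemma tendsto_linear_pow_mul_rpow_neg (a b : ℝ) (q : ℕ) {c ε : ℝ} (hc : 1 < c) (hε : 0 < ε) :
    Tendsto (fun x : ℝ => (a * x + b) ^ q * c ^ (-(ε * x))) atTop (𝓝 0) := by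
  have hlinear : (fun x : ℝ => a * x + b) =O[atTop] fun x => x :=
    ((Asymptotics.isBigO_refl _ _).const_mul_left a).add
      (Asymptotics.isLittleO_const_id_atTop b).isBigO
  have hlittle := (hlinear.pow q).trans_isLittleO
    (isLittleO_pow_exp_pos_mul_atTop q (mul_pos (log_pos hc) hε))
  have hc0 : 0 < c := zero_lt_one.trans hc
  refine hlittle.tendsto_div_nhds_zero.congr fun x => ?_
  rw [rpow_neg hc0.le, rpow_def_of_pos hc0, mul_assoc, div_eq_mul_inv]

lemma tendsto_logb_natCast_atTop {b : ℝ} (hb : 1 < b) :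
    Tendsto (fun N : ℕ => logb b N) atTop atTop :=
  (tendsto_logb_atTop hb).comp tendsto_natCast_atTop_atTop

lemma measureReal_compl_brwMin_lt_le_of_tail_le {Ω : Type*} [MeasurableSpace Ω] {P : Measure Ω}
    [IsFiniteMeasure P] {C ε : ℝ} {q N T m : ℕ} (hC : 0 ≤ C) (hN : 2 ≤ N)
    {J : ℕ → Fin N → Fin 2 → Ω → ℝ} (hJ : ∀ k i j, Measurable (J k i j))
    (hJ0 : ∀ k i j ω, 0 ≤ J k i j ω)
    (htail : ∀ k i j, ∀ η > 0,
      tail P (J k i j) η ≤ C * (1 + 2 / η) ^ q * (2 * N * logb 2 N)⁻¹)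
    (hε : 0 < ε) (hT : T ≤ m + ⌊(1 - ε) * logb 2 N⌋₊) :
    P.real {ω | brwMin N (fun k i j => J k i j ω) T < brwMax N (fun k i j => J k i j ω) m + ε}ᶜ ≤
      C * ((2 / ε * logb 2 N + (1 + 2 / ε)) ^ q * (2 : ℝ) ^ (-(ε * logb 2 N))) := by
  have hN0 : (0 : ℝ) < N := by positivity
  set L := logb 2 (N : ℝ)
  have hL : 0 < L := logb_pos one_lt_two (by exact_mod_cast hN)
  have hεL : (1 - ε) * L ≤ L := mul_le_of_le_one_left hL.le (by linarith)
  set k := ⌊(1 - ε) * L⌋₊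
  have hk : (k : ℝ) ≤ L := (Nat.cast_le.2 (Nat.floor_le_floor hεL)).trans (Nat.floor_le hL.le)
  have hpow : (2 : ℝ) ^ ((1 - ε) * L) = N * 2 ^ (-(ε * L)) := by
    rw [sub_mul, one_mul, sub_eq_add_neg, rpow_add two_pos, rpow_logb two_pos (by norm_num) hN0]
  have hbase : 1 + 2 / (ε / (k + 1)) ≤ 2 / ε * L + (1 + 2 / ε) := by
    rw [div_div_eq_mul_div, mul_div_right_comm]
    linarith [mul_le_mul_of_nonneg_left hk (by positivity : 0 ≤ 2 / ε)]
  calc P.real {ω | brwMin N (fun k i j => J k i j ω) T <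
        brwMax N (fun k i j => J k i j ω) m + ε}ᶜ
      ≤ 2 * (k * (2 : ℝ) ^ k) * (C * (1 + 2 / (ε / (k + 1))) ^ q * (2 * N * L)⁻¹) :=
        measureReal_compl_brwMin_lt_le (by omega) hJ hJ0 hε hT
          fun n i j => htail n i j (ε / (k + 1)) (by positivity)
    _ ≤ 2 * (L * 2 ^ ((1 - ε) * L)) *
          (C * (2 / ε * L + (1 + 2 / ε)) ^ q * (2 * N * L)⁻¹) := by
        gcongr 2 * ?_ * (C * ?_ ^ q * _)
        exact floor_mul_pow_floor_le hεL hL.le one_le_two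
    _ = C * ((2 / ε * L + (1 + 2 / ε)) ^ q * 2 ^ (-(ε * L))) := by
        rw [hpow]
        field_simp

lemma tendsto_measureReal_compl_brwMin_lt {Ω : Type*} [MeasurableSpace Ω] {P : Measure Ω}
    [IsFiniteMeasure P] {X : Ω → ℝ} (hXpos : ∀ x, 0 < tail P X x)
    (hXdom : tail P X =O[atTop] fun x => tail P X (2 * x))
    {ξ : (N : ℕ) → ℕ → Fin N → Fin 2 → Ω → ℝ}
    (hξmeas : ∀ N n i j, Measurable (ξ N n i j)) (hξpos : ∀ N n i j ω, 0 ≤ ξ N n i j ω)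
    (hξtail : ∀ N n i j x, tail P (ξ N n i j) x ≤ tail P X x) (n₀ : ℕ → ℕ) {ε : ℝ} (hε : 0 < ε) :
    Tendsto (fun N : ℕ =>
      P.real {ω | brwMin N (fun k i j => ξ N k i j ω / cN P X N)
            ((↑(n₀ N) + ⌊(1 - ε) * logb 2 N⌋).toNat) <
          brwMax N (fun k i j => ξ N k i j ω / cN P X N) (n₀ N) + ε}ᶜ)
      atTop (𝓝 0) := by
  obtain ⟨C, q, hC, hjump⟩ := exists_tail_div_hinv_le hXpos hXdom
  have hlim := ((tendsto_linear_pow_mul_rpow_neg (2 / ε) (1 + 2 / ε) q one_lt_two hε).comp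
    (tendsto_logb_natCast_atTop one_lt_two)).const_mul C
  rw [mul_zero] at hlim
  refine squeeze_zero' (Eventually.of_forall fun N => measureReal_nonneg) ?_ hlim
  filter_upwards [eventually_ge_atTop 2] with N hN
  have hlog : 0 < logb 2 (N : ℝ) := logb_pos one_lt_two (by exact_mod_cast hN)
  refine measureReal_compl_brwMin_lt_le_of_tail_le hC hN
    (fun k i j => (hξmeas N k i j).div_const _)
    (fun k i j ω => div_nonneg (hξpos N k i j ω) (hinv_nonneg X _))
    (fun k i j => hjump _ (hξtail N k i j) _ (by positivity)) hε ?_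
  have := Int.floor_toNat ((1 - ε) * logb 2 (N : ℝ))
  omega

theorem stmt_4_general {Ω : Type*} [MeasurableSpace Ω] (P : Measure Ω) [IsProbabilityMeasure P]
    (X : Ω → ℝ) (hXpos : ∀ x, 0 < tail P X x)
    (hXdom : tail P X =O[atTop] fun x => tail P X (2 * x))
    (ξ : (N : ℕ) → ℕ → Fin N → Fin 2 → Ω → ℝ)
    (hξmeas : ∀ N n i j, Measurable (ξ N n i j))
    (hξpos : ∀ N n i j ω, 0 ≤ ξ N n i j ω)
    (hξtail : ∀ N n i j x, tail P (ξ N n i j) x ≤ tail P X x)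
    (n₀ : ℕ → ℕ) (ℱ : ℕ → MeasurableSpace Ω) (hℱ : ∀ N, ℱ N ≤ ‹MeasurableSpace Ω›)
    (ε : ℝ) (hε : 0 < ε) :
    (∀ d : ℝ, 0 < d →
      Tendsto (fun N : ℕ =>
        (P {ω | d < |(P[Set.indicator
            {ω' | brwMin N (fun k i j => ξ N k i j ω' / cN P X N)
                ((↑(n₀ N) + ⌊(1 - ε) * Real.logb 2 N⌋).toNat) <
              brwMax N (fun k i j => ξ N k i j ω' / cN P X N) (n₀ N) + ε}
            (fun _ => (1 : ℝ)) | ℱ N]) ω - 1|}).toReal)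
        atTop (nhds 0)) ∧
    Tendsto (fun N : ℕ =>
      (P {ω | brwMin N (fun k i j => ξ N k i j ω / cN P X N)
            ((↑(n₀ N) + ⌊(1 - ε) * Real.logb 2 N⌋).toNat) <
          brwMax N (fun k i j => ξ N k i j ω / cN P X N) (n₀ N) + ε}).toReal)
      atTop (nhds 1) := by
  have hbad := tendsto_measureReal_compl_brwMin_lt hXpos hXdom hξmeas hξpos hξtail n₀ hε
  have hscaled (N n i j) : Measurable fun ω => ξ N n i j ω / cN P X N :=
    (hξmeas N n i j).div_const _
  have hgood (N : ℕ) : MeasurableSet {ω | brwMin N (fun k i j => ξ N k i j ω / cN P X N)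
      ((↑(n₀ N) + ⌊(1 - ε) * logb 2 N⌋).toNat) <
        brwMax N (fun k i j => ξ N k i j ω / cN P X N) (n₀ N) + ε} :=
    measurableSet_lt (measurable_brwMin (hscaled N) _)
      ((measurable_brwMax (hscaled N) _).add_const ε)
  refine ⟨fun d hd => ?_, ?_⟩
  · refine squeeze_zero (fun N => measureReal_nonneg)
      (fun N => measureReal_lt_abs_condExp_indicator_sub_one_le (hℱ N) (hgood N) hd) ?_
    simpa only [zero_div] using hbad.div_const d
  · have h := hbad.const_sub 1
    rw [sub_zero] at h
    exact h.congr fun N => by rw [probReal_compl_eq_one_sub (hgood N), sub_sub_cancel]; rfl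

/-- Lemma "upper_min": for every `n₀ ≥ 0` and `ε > 0`,
`P(𝒴_1(n₀ + ⌊(1−ε) log₂ N⌋) < 𝒴_N(n₀) + ε | F_{n₀}) → 1` in probability as `N → ∞`;
in particular the unconditional probability tends to `1`. -/
theorem stmt_4 {Ω : Type*} [MeasurableSpace Ω] (P : Measure Ω) [IsProbabilityMeasure P]
    (X : Ω → ℝ) (hXmeas : Measurable X) (hXpos : ∀ ω, 0 ≤ X ω)
    (α : ℝ) (hα : 0 < α)
    (hRV : ∀ l : ℝ, 0 < l →
      Tendsto (fun x => tail P X x / tail P X (l * x)) atTop (nhds (l ^ α)))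
    (ξ : (N : ℕ) → ℕ → Fin N → Fin 2 → Ω → ℝ)
    (hξmeas : ∀ N n i j, Measurable (ξ N n i j))
    (hξpos : ∀ N n i j ω, 0 ≤ ξ N n i j ω)
    (hξdist : ∀ N n i j, Measure.map (ξ N n i j) P = Measure.map X P)
    (hξindep : ∀ N, iIndepFun
      (fun p : ℕ × Fin N × Fin 2 => ξ N p.1 p.2.1 p.2.2) P)
    (n₀ : ℕ) (ε : ℝ) (hε : 0 < ε) :
    (∀ d : ℝ, 0 < d →
      Tendsto (fun N : ℕ =>
        (P {ω | d < |(P[Set.indicator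
            {ω' | brwMin N (fun k i j => ξ N k i j ω' / cN P X N)
                ((↑n₀ + ⌊(1 - ε) * Real.logb 2 N⌋).toNat) <
              brwMax N (fun k i j => ξ N k i j ω' / cN P X N) n₀ + ε}
            (fun _ => (1 : ℝ)) | brwFilt N (ξ N) n₀]) ω - 1|}).toReal)
        atTop (nhds 0)) ∧
    Tendsto (fun N : ℕ =>
      (P {ω | brwMin N (fun k i j => ξ N k i j ω / cN P X N)
            ((↑n₀ + ⌊(1 - ε) * Real.logb 2 N⌋).toNat) <
          brwMax N (fun k i j => ξ N k i j ω / cN P X N) n₀ + ε}).toReal)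
      atTop (nhds 1) := by
  have hpos := pos_of_tendsto_div (antitone_tail X) (tail_nonneg X) (hRV 2 two_pos) (by positivity)
  exact stmt_4_general P X hpos (isBigO_two_mul_of_tendsto_div hpos (hRV 2 two_pos)) ξ hξmeas hξpos
    (fun N n i j x => (congrFun (tail_eq_of_map_eq (hξmeas N n i j) hXmeas (hξdist N n i j)) x).le)
    (fun _ => n₀) _ (fun N => brwFilt_le (hξmeas N) n₀) ε hε

end
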